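/- Let p < 1 with p ≠ 0 and let p' = p/(p−1) be its conjugate exponent. If the generator g is strictly decreasing, then for all a, b ∈ ℝ with g(a) > 0 and g(b) > 0 it holds that a ⊗ b ≤_g (a^(p) ⊘ g⁻¹(p)) ⊕ (b^(p') ⊘ g⁻¹(p')); equivalently, g(a)^p/p + g(b)^{p'}/p' ≤ g(a)·g(b). -/

import Mathlib

noncomputable section

/-- pseudo-addition: `x ⊕ y = g⁻¹(g x + g y)` -/
def padd (g ginv : ℝ → ℝ) (x y : ℝ) : ℝ := ginv (g x + g y)

/-- pseudo-multiplication: `x ⊗ y = g⁻¹(g x * g y)` -/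
def pmul (g ginv : ℝ → ℝ) (x y : ℝ) : ℝ := ginv (g x * g y)

/-- pseudo-division: `x ⊘ y = g⁻¹(g x / g y)` -/
def pdiv (g ginv : ℝ → ℝ) (x y : ℝ) : ℝ := ginv (g x / g y)

/-- pseudo-power: `x^(p) = g⁻¹((g x)^p)` (real power) -/
def ppow (g ginv : ℝ → ℝ) (x p : ℝ) : ℝ := ginv (g x ^ p)

/-- pseudo-order for a decreasing generator: `x ≤_g y ↔ g x ≥ g y` -/
def pleDec (g : ℝ → ℝ) (x y : ℝ) : Prop := g y ≤ g x

theorem young_rev_aux (p q x y : ℝ) (h0 : 0 < p) (hp : p < 1) (hq : q = p / (p - 1))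
    (hx : 0 < x) (hy : 0 < y) : x ^ p / p + y ^ q / q ≤ x * y := by
  have h1 : p - 1 ≠ 0 := by linarith
  have h := Real.geom_mean_le_arith_mean2_weighted h0.le (by linarith : 0 ≤ 1 - p)
    (mul_pos hx hy).le (Real.rpow_pos_of_pos hy q).le (by ring)
  have e : q * (1 - p) = -p := by rw [hq]; field_simp; ring
  rw [← Real.rpow_mul hy.le, e, Real.mul_rpow hx.le hy.le, mul_assoc, ← Real.rpow_add hy,
    add_neg_cancel, Real.rpow_zero, mul_one] at h
  have e2 : y ^ q / q = y ^ q * (p - 1) / p := by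
    generalize y ^ q = z
    rw [hq]; field_simp
  rw [e2, ← add_div, div_le_iff₀ h0]
  linarith

/-- Pseudo-Young inequality for a decreasing generator, `p < 1`, `p ≠ 0`:
`a ⊗ b ≤_g (a^(p) ⊘ g⁻¹(p)) ⊕ (b^(p') ⊘ g⁻¹(p'))`. -/
theorem pseudo_young_rev_dec (g ginv : ℝ → ℝ)
    (hmono : StrictAnti g) (hcont : Continuous g)
    (hli : Function.LeftInverse ginv g) (hri : Function.RightInverse ginv g)
    (p p' : ℝ) (hp : p < 1) (hp0 : p ≠ 0) (hp' : p' = p / (p - 1))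
    (a b : ℝ) (ha : 0 < g a) (hb : 0 < g b) :
    pleDec g (pmul g ginv a b)
      (padd g ginv (pdiv g ginv (ppow g ginv a p) (ginv p))
        (pdiv g ginv (ppow g ginv b p') (ginv p'))) := by
  have h1 : p - 1 ≠ 0 := by linarith
  simp only [pleDec, padd, pmul, pdiv, ppow, hri _]
  rcases lt_or_gt_of_ne hp0 with h | h
  · have hq0 : 0 < p' := by rw [hp']; exact div_pos_of_neg_of_neg h (by linarith)
    have e : p' - 1 = 1 / (p - 1) := by rw [hp']; field_simp; ring
    have hq1 : p' < 1 := by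
      have : 1 / (p - 1) < 0 := one_div_neg.2 (by linarith)
      linarith
    have := young_rev_aux p' p (g b) (g a) hq0 hq1 (by rw [e, hp']; field_simp) hb ha
    linarith
  · exact young_rev_aux p p' _ _ h hp hp' ha hb
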